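/- Let (W,T) be a dual Coxeter system of finite rank and let W' be a parabolic subgroup of W, with T' = W' ∩ T the set of reflections lying in W'. Then for every w ∈ W' one has Red_T(w) = Red_{T'}(w); that is, every minimal-length factorization of w into reflections of W uses only reflections belonging to W'. -/

import Mathlib

/-- `Red T' w`: the set of minimal-length factorizations of `w` into elements of `T'`. -/
def Red {W : Type*} [Group W] (T' : Set W) (w : W) : Set (List W) :=
  {l | (∀ t ∈ l, t ∈ T') ∧ l.prod = w ∧
    ∀ l' : List W, (∀ t ∈ l', t ∈ T') → l'.prod = w → l.length ≤ l'.length}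

/-!
Walk down the Bruhat graph. Read a shortest reflection factorization `w = t₁ ⋯ tₖ` from the left as
the path `w, t₁w, t₂t₁w, …, 1`. If its first step goes up in length, then, since by induction the
remaining path may be taken to start with a step down, the vertex `x` in between has two distinct
left inversions `t` and `t'`. Deleting from a reduced word of `x` the two corresponding letters
shows that `t * t' * x` or `t' * t * x` is shorter than `x`, which lets a Hurwitz move on the first
two factors lower the middle vertex. So some Hurwitz-equivalent factorization begins with a left
inversion of `w`. For `w` in a standard parabolic subgroup `W_J`, strong exchange places that
reflection in `W_J`, and induction places all the others there too. Finally, Hurwitz moves do not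
change the subgroup generated by the factors.
-/

section Red

variable {G : Type*} [Group G] {S T : Set G} {w : G}

theorem exists_mem_red {l : List G} (hl : ∀ t ∈ l, t ∈ T) (hprod : l.prod = w) :
    ∃ l₀ ∈ Red T w, l₀.length ≤ l.length := by
  obtain ⟨l₀, ⟨hl₀, hprod₀⟩, hmin⟩ := exists_minimalFor_of_wellFoundedLT
    (fun l : List G => (∀ t ∈ l, t ∈ T) ∧ l.prod = w) List.length ⟨l, hl, hprod⟩
  have hle (l' : List G) (hl' : ∀ t ∈ l', t ∈ T) (hprod' : l'.prod = w) :
      l₀.length ≤ l'.length :=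
    (le_total _ _).elim id (hmin ⟨hl', hprod'⟩)
  exact ⟨l₀, ⟨hl₀, hprod₀, hle⟩, hle l hl hprod⟩

theorem red_eq_red_inter (h : ∀ l ∈ Red T w, ∀ t ∈ l, t ∈ S) : Red T w = Red (S ∩ T) w := by
  ext l
  constructor
  · intro hl
    exact ⟨fun t ht => ⟨h l hl t ht, hl.1 t ht⟩, hl.2.1,
      fun l' hl' => hl.2.2 l' fun t ht => (hl' t ht).2⟩
  · rintro ⟨hlST, hprod, hmin⟩
    refine ⟨fun t ht => (hlST t ht).2, hprod, fun l' hl' hprod' => ?_⟩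
    obtain ⟨l₀, hl₀, hle⟩ := exists_mem_red hl' hprod'
    exact (hmin l₀ (fun t ht => ⟨h l₀ hl₀ t ht, hl₀.1 t ht⟩) hl₀.2.1).trans hle

theorem tail_mem_red {t : G} {l : List G} (h : t :: l ∈ Red T w) : l ∈ Red T l.prod := by
  obtain ⟨hT, hprod, hmin⟩ := h
  rw [List.forall_mem_cons] at hT
  refine ⟨hT.2, rfl, fun l' hl' hprod' => ?_⟩
  have hle := hmin (t :: l') (List.forall_mem_cons.2 ⟨hT.1, hl'⟩)
    (by rw [List.prod_cons, hprod', ← hprod, List.prod_cons])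
  simpa only [List.length_cons, Nat.add_le_add_iff_right] using hle

theorem mul_ne_one_of_cons_cons_mem_red {t u : G} {l : List G} (h : t :: u :: l ∈ Red T w) :
    t * u ≠ 1 := by
  obtain ⟨hT, hprod, hmin⟩ := h
  intro htu
  have hle := hmin l (fun v hv => hT v (by simp [hv]))
    (by rw [← hprod, List.prod_cons, List.prod_cons, ← mul_assoc, htu, one_mul])
  simp only [List.length_cons] at hle
  omega

end Red

/-- Two lists of group elements are Hurwitz equivalent if they lie in one orbit of the Hurwitz
action of the braid group, whose generators send `(…, t, u, …)` to `(…, t * u * t⁻¹, t, …)`.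
The relation is generated like `List.Perm`, with the braid generator acting on the first two
entries and `cons` moving it to the other positions. -/
inductive HurwitzEquiv {G : Type*} [Group G] : List G → List G → Prop
  | refl (l : List G) : HurwitzEquiv l l
  | symm {l l' : List G} : HurwitzEquiv l l' → HurwitzEquiv l' l
  | trans {l l' l'' : List G} : HurwitzEquiv l l' → HurwitzEquiv l' l'' → HurwitzEquiv l l''
  | cons (t : G) {l l' : List G} : HurwitzEquiv l l' → HurwitzEquiv (t :: l) (t :: l')
  | braid (t u : G) (l : List G) : HurwitzEquiv (t :: u :: l) (t * u * t⁻¹ :: t :: l)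

namespace HurwitzEquiv

variable {G : Type*} [Group G] {l l' : List G}

theorem braid_inv (t u : G) (l : List G) :
    HurwitzEquiv (t :: u :: l) (u :: u⁻¹ * t * u :: l) := by
  have h := braid u (u⁻¹ * t * u) l
  rw [show u * (u⁻¹ * t * u) * u⁻¹ = t by group] at h
  exact h.symm

theorem length_eq (h : HurwitzEquiv l l') : l.length = l'.length := by
  induction h with
  | refl => rfl
  | symm _ ih => exact ih.symm
  | trans _ _ ih ih' => exact ih.trans ih'
  | cons t _ ih => rw [List.length_cons, List.length_cons, ih]
  | braid => rfl

theorem prod_eq (h : HurwitzEquiv l l') : l.prod = l'.prod := by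
  induction h with
  | refl => rfl
  | symm _ ih => exact ih.symm
  | trans _ _ ih ih' => exact ih.trans ih'
  | cons t _ ih => rw [List.prod_cons, List.prod_cons, ih]
  | braid t u l => simp only [List.prod_cons, mul_assoc, inv_mul_cancel_left]

theorem forall_mem_iff {P : Set G} (hP : ∀ t ∈ P, ∀ u, t * u * t⁻¹ ∈ P ↔ u ∈ P)
    (h : HurwitzEquiv l l') : (∀ t ∈ l, t ∈ P) ↔ ∀ t ∈ l', t ∈ P := by
  induction h with
  | refl => rfl
  | symm _ ih => exact ih.symm
  | trans _ _ ih ih' => exact ih.trans ih'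
  | cons t _ ih => rw [List.forall_mem_cons, List.forall_mem_cons, ih]
  | braid t u l =>
    simp only [List.forall_mem_cons, and_left_comm (a := t * u * t⁻¹ ∈ P)]
    exact and_congr_right fun ht => and_congr_left' (hP t ht u).symm

theorem forall_mem_subgroup_iff (H : Subgroup G) (h : HurwitzEquiv l l') :
    (∀ t ∈ l, t ∈ H) ↔ ∀ t ∈ l', t ∈ H :=
  h.forall_mem_iff (P := H) fun _ ht _ =>
    (H.mul_mem_cancel_right (H.inv_mem ht)).trans (H.mul_mem_cancel_left ht)

theorem mem_red {T : Set G} (hT : ∀ t ∈ T, ∀ u, t * u * t⁻¹ ∈ T ↔ u ∈ T) {w : G}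
    (h : HurwitzEquiv l l') (hl : l ∈ Red T w) : l' ∈ Red T w :=
  ⟨(h.forall_mem_iff hT).1 hl.1, h.prod_eq.symm.trans hl.2.1, h.length_eq ▸ hl.2.2⟩

end HurwitzEquiv

section StrongExchange

open CoxeterSystem

variable {B W : Type*} [Group W] {M : CoxeterMatrix B} (cs : CoxeterSystem M W)

theorem prod_map_alternatingWord_two_mul {N : Type*} [Monoid N] (f : B → N) (i j : B) (p : ℕ) :
    ((alternatingWord i j (2 * p)).map f).prod = (f i * f j) ^ p := by
  induction p with
  | zero => simp [alternatingWord]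
  | succ p ih =>
    rw [mul_add_one, alternatingWord_succ, alternatingWord_succ]
    simp [ih, pow_succ]

theorem leftInvSeq_alternatingWord_two_mul (i j : B) (p : ℕ) :
    cs.leftInvSeq (alternatingWord i j (2 * p)) =
      (List.range (2 * p)).map fun k => cs.simple i * (cs.simple j * cs.simple i) ^ k := by
  refine List.ext_getElem (by simp) fun k hk _ => ?_
  rw [length_leftInvSeq, length_alternatingWord] at hk
  have hk' : (2 * k + 1) / 2 = k := by omega
  rw [cs.getElem_leftInvSeq_alternatingWord i j p k hk, prod_alternatingWord_eq_mul_pow, hk']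
  simp

theorem leftInvSeq_alternatingWord_two_mul_coxeterMatrix (i j : B) :
    ∃ l : List W, cs.leftInvSeq (alternatingWord i j (2 * M i j)) = l ++ l := by
  rw [leftInvSeq_alternatingWord_two_mul, two_mul, List.range_add, List.map_append, List.map_map]
  exact ⟨_, congrArg _ (List.map_congr_left fun k _ => by simp [pow_add])⟩

open Classical in
/-- The permutation of `W × ZMod 2` by which the simple reflection `s i` acts: it conjugates the
first entry by `s i` and changes the sign, encoded in `ZMod 2`, of `s i` alone. Bourbaki and
Björner–Brenti use this action, on signed reflections, to prove the strong exchange property. -/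
noncomputable def signedConj (i : B) : Equiv.Perm (W × ZMod 2) :=
  Function.Involutive.toPerm
    (fun p => (cs.simple i * p.1 * cs.simple i, p.2 + if p.1 = cs.simple i then 1 else 0)) <| by
    rintro ⟨t, ε⟩
    have hconj : cs.simple i * t * cs.simple i = cs.simple i ↔ t = cs.simple i := by
      rw [mul_eq_right, ← cs.inv_simple, inv_mul_eq_one, eq_comm, cs.inv_simple]
    simp only [hconj, add_assoc, CharTwo.add_self_eq_zero, add_zero]
    simp [mul_assoc]

open Classical in
theorem signedConj_inv_apply (i : B) (t : W) (ε : ZMod 2) :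
    (signedConj cs i)⁻¹ (t, ε) =
      (cs.simple i * t * cs.simple i, ε + if t = cs.simple i then 1 else 0) := rfl

open Classical in
theorem prod_map_signedConj_inv_apply (ω : List B) (t : W) (ε : ZMod 2) :
    ((ω.map (signedConj cs)).prod)⁻¹ (t, ε) =
      ((cs.wordProd ω)⁻¹ * t * cs.wordProd ω, ε + (cs.leftInvSeq ω).count t) := by
  induction ω generalizing t ε with
  | nil => simp
  | cons i ω ih =>
    have hconj : t = MulAut.conj (cs.simple i) (cs.simple i * t * cs.simple i) := by
      simp [mul_assoc]
    have hcount : ((cs.leftInvSeq ω).map (MulAut.conj (cs.simple i))).count t =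
        (cs.leftInvSeq ω).count (cs.simple i * t * cs.simple i) := by
      conv_lhs => rw [hconj]
      exact List.count_map_of_injective _ _ (MulAut.conj (cs.simple i)).injective _
    rw [List.map_cons, List.prod_cons, mul_inv_rev, Equiv.Perm.mul_apply, signedConj_inv_apply, ih,
      wordProd_cons, leftInvSeq, List.count_cons, hcount]
    refine Prod.ext (by simp [mul_assoc]) ?_
    simp only [beq_iff_eq, eq_comm (a := t)]
    push_cast
    ring

theorem isLiftable_signedConj : M.IsLiftable (signedConj cs) := by
  classical
  intro i j
  obtain ⟨l, hl⟩ := leftInvSeq_alternatingWord_two_mul_coxeterMatrix cs i j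
  have hword : cs.wordProd (alternatingWord i j (2 * M i j)) = 1 := by
    simp [prod_alternatingWord_eq_mul_pow]
  rw [← prod_map_alternatingWord_two_mul, ← inv_eq_one]
  ext1 ⟨t, ε⟩
  rw [prod_map_signedConj_inv_apply, hl, hword, List.count_append, Nat.cast_add,
    CharTwo.add_self_eq_zero]
  simp

/-- The homomorphism from a Coxeter group to the permutations of its signed elements that extends
`signedConj`. -/
noncomputable def signedConjHom : W →* Equiv.Perm (W × ZMod 2) :=
  cs.lift ⟨signedConj cs, isLiftable_signedConj cs⟩

theorem signedConjHom_wordProd (ω : List B) :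
    signedConjHom cs (cs.wordProd ω) = (ω.map (signedConj cs)).prod := by
  rw [wordProd, map_list_prod, List.map_map]
  congr 2
  funext i
  exact cs.lift_apply_simple (isLiftable_signedConj cs) i

/-- The parity of the number of occurrences of `t` in the left inversion sequence of a word for `w`,
which does not depend on the word; see `inversionParity_wordProd`. -/
noncomputable def inversionParity (w t : W) : ZMod 2 := ((signedConjHom cs w)⁻¹ (t, 0)).2

open Classical in
theorem inversionParity_wordProd (ω : List B) (t : W) :
    inversionParity cs (cs.wordProd ω) t = (cs.leftInvSeq ω).count t := by
  rw [inversionParity, signedConjHom_wordProd, prod_map_signedConj_inv_apply, zero_add]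

theorem signedConjHom_inv_apply (w t : W) (ε : ZMod 2) :
    (signedConjHom cs w)⁻¹ (t, ε) = (w⁻¹ * t * w, ε + inversionParity cs w t) := by
  classical
  obtain ⟨ω, rfl⟩ := cs.wordProd_surjective w
  rw [inversionParity_wordProd, signedConjHom_wordProd, prod_map_signedConj_inv_apply]

theorem inversionParity_mul (v w t : W) :
    inversionParity cs (v * w) t = inversionParity cs v t + inversionParity cs w (v⁻¹ * t * v) := by
  rw [inversionParity, map_mul, mul_inv_rev, Equiv.Perm.mul_apply, signedConjHom_inv_apply,
    signedConjHom_inv_apply, zero_add]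

theorem inversionParity_one (t : W) : inversionParity cs 1 t = 0 := by
  simp [inversionParity]

theorem inversionParity_simple_self (i : B) :
    inversionParity cs (cs.simple i) (cs.simple i) = 1 := by
  classical
  rw [← wordProd_singleton, inversionParity_wordProd, wordProd_singleton, leftInvSeq_singleton,
    List.count_singleton_self, Nat.cast_one]

variable {cs}

theorem inversionParity_self {t : W} (ht : cs.IsReflection t) : inversionParity cs t t = 1 := by
  obtain ⟨u, i, rfl⟩ := ht
  set t := u * cs.simple i * u⁻¹ with ht
  have hconj : u⁻¹ * t * u = cs.simple i := by rw [ht]; group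
  have hcancel : inversionParity cs u t + inversionParity cs u⁻¹ (cs.simple i) = 0 := by
    rw [← hconj, ← inversionParity_mul, mul_inv_cancel, inversionParity_one]
  calc inversionParity cs t t
      = inversionParity cs (u * (cs.simple i * u⁻¹)) t := by rw [ht, mul_assoc]
    _ = inversionParity cs u t + (1 + inversionParity cs u⁻¹ (cs.simple i)) := by
      rw [inversionParity_mul, hconj, inversionParity_mul, inversionParity_simple_self,
        inv_mul_cancel, one_mul]
    _ = 1 := by rw [add_left_comm, hcancel, add_zero]

theorem mem_leftInvSeq_of_inversionParity_ne_zero {ω : List B} {t : W}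
    (h : inversionParity cs (cs.wordProd ω) t ≠ 0) : t ∈ cs.leftInvSeq ω := by
  classical
  contrapose! h
  rw [inversionParity_wordProd, List.count_eq_zero_of_not_mem h, Nat.cast_zero]

theorem exists_mul_wordProd_eq_eraseIdx {ω : List B} {t : W} (ht : t ∈ cs.leftInvSeq ω) :
    ∃ k < ω.length, t * cs.wordProd ω = cs.wordProd (ω.eraseIdx k) := by
  obtain ⟨k, hk, rfl⟩ := List.mem_iff_getElem.1 ht
  refine ⟨k, by simpa using hk, ?_⟩
  rw [← cs.getD_leftInvSeq_mul_wordProd, List.getD_eq_getElem _ 1 hk]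

theorem length_mul_wordProd_lt {ω : List B} {t : W} (ht : t ∈ cs.leftInvSeq ω) :
    cs.length (t * cs.wordProd ω) < ω.length := by
  obtain ⟨k, hk, heq⟩ := exists_mul_wordProd_eq_eraseIdx ht
  calc cs.length (t * cs.wordProd ω)
      = cs.length (cs.wordProd (ω.eraseIdx k)) := by rw [heq]
    _ ≤ (ω.eraseIdx k).length := cs.length_wordProd_le _
    _ < ω.length := by rw [← List.length_eraseIdx_add_one hk]; exact lt_add_one _

theorem length_mul_lt_of_inversionParity_ne_zero {w t : W} (h : inversionParity cs w t ≠ 0) :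
    cs.length (t * w) < cs.length w := by
  obtain ⟨ω, hω, rfl⟩ := cs.exists_isReduced w
  rw [hω.eq]
  exact length_mul_wordProd_lt (mem_leftInvSeq_of_inversionParity_ne_zero h)

theorem inversionParity_ne_zero_of_isLeftInversion {w t : W} (ht : cs.IsLeftInversion w t) :
    inversionParity cs w t ≠ 0 := by
  obtain ⟨hrefl, hlt⟩ := ht
  intro hzero
  have hflip : inversionParity cs (t * w) t = 1 := by
    rw [inversionParity_mul, inversionParity_self hrefl, inv_mul_cancel, one_mul, hzero, add_zero]
  have hgt : cs.length (t * (t * w)) < cs.length (t * w) :=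
    length_mul_lt_of_inversionParity_ne_zero (by rw [hflip]; exact one_ne_zero)
  rw [← mul_assoc, hrefl.mul_self, one_mul] at hgt
  exact lt_asymm hlt hgt

/-- The strong exchange property; the word `ω` need not be reduced. -/
theorem mem_leftInvSeq_of_isLeftInversion {ω : List B} {t : W}
    (ht : cs.IsLeftInversion (cs.wordProd ω) t) : t ∈ cs.leftInvSeq ω :=
  mem_leftInvSeq_of_inversionParity_ne_zero (inversionParity_ne_zero_of_isLeftInversion ht)

variable (cs) in
theorem pairwise_leftInvSeq_length_mul_mul_wordProd_lt (ω : List B) :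
    (cs.leftInvSeq ω).Pairwise fun t t' => cs.length (t * t' * cs.wordProd ω) < ω.length := by
  induction ω with
  | nil => exact List.Pairwise.nil
  | cons i ω ih =>
    rw [leftInvSeq, List.pairwise_cons, List.pairwise_map, wordProd_cons, List.length_cons]
    constructor
    · intro t' ht'
      obtain ⟨u, hu, rfl⟩ := List.mem_map.1 ht'
      have heq : cs.simple i * MulAut.conj (cs.simple i) u * (cs.simple i * cs.wordProd ω) =
          u * cs.wordProd ω := by simp [mul_assoc]
      rw [heq]
      exact (length_mul_wordProd_lt hu).trans (lt_add_one _)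
    · refine ih.imp fun {u u'} hlt => ?_
      have heq : MulAut.conj (cs.simple i) u * MulAut.conj (cs.simple i) u' *
          (cs.simple i * cs.wordProd ω) = cs.simple i * (u * u' * cs.wordProd ω) := by
        simp [mul_assoc]
      have hle := cs.length_mul_le (cs.simple i) (u * u' * cs.wordProd ω)
      rw [length_simple] at hle
      rw [heq]
      omega

theorem length_mul_mul_lt_or_of_isLeftInversion {w t t' : W} (ht : cs.IsLeftInversion w t)
    (ht' : cs.IsLeftInversion w t') (hne : t ≠ t') :
    cs.length (t * t' * w) < cs.length w ∨ cs.length (t' * t * w) < cs.length w := by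
  obtain ⟨ω, hω, rfl⟩ := cs.exists_isReduced w
  rw [hω.eq]
  let R (u u' : W) : Prop := cs.length (u * u' * cs.wordProd ω) < ω.length ∨
    cs.length (u' * u * cs.wordProd ω) < ω.length
  have hsymm : Std.Symm R := ⟨fun _ _ => Or.symm⟩
  have hpair : (cs.leftInvSeq ω).Pairwise R :=
    (pairwise_leftInvSeq_length_mul_mul_wordProd_lt cs ω).imp Or.inl
  exact hpair.forall (mem_leftInvSeq_of_isLeftInversion ht)
    (mem_leftInvSeq_of_isLeftInversion ht') hne

end StrongExchange

section Parabolic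

variable {B W : Type*} [Group W] {M : CoxeterMatrix B} {cs : CoxeterSystem M W} {J : Set B}

theorem wordProd_mem_closure {ω : List B} (hω : ∀ i ∈ ω, i ∈ J) :
    cs.wordProd ω ∈ Subgroup.closure (cs.simple '' J) := by
  refine Subgroup.list_prod_mem _ fun x hx => ?_
  obtain ⟨i, hi, rfl⟩ := List.mem_map.1 hx
  exact Subgroup.subset_closure ⟨i, hω i hi, rfl⟩

theorem exists_wordProd_eq_of_mem_closure {w : W} (hw : w ∈ Subgroup.closure (cs.simple '' J)) :
    ∃ ω : List B, (∀ i ∈ ω, i ∈ J) ∧ cs.wordProd ω = w := by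
  induction hw using Subgroup.closure_induction with
  | mem x hx =>
    obtain ⟨i, hi, rfl⟩ := hx
    exact ⟨[i], by simpa using hi, cs.wordProd_singleton i⟩
  | one => exact ⟨[], by simp, cs.wordProd_nil⟩
  | mul x y _ _ hx hy =>
    obtain ⟨ω, hω, rfl⟩ := hx
    obtain ⟨υ, hυ, rfl⟩ := hy
    exact ⟨ω ++ υ, List.forall_mem_append.2 ⟨hω, hυ⟩, cs.wordProd_append ω υ⟩
  | inv x _ hx =>
    obtain ⟨ω, hω, rfl⟩ := hx
    exact ⟨ω.reverse, fun i hi => hω i (List.mem_reverse.1 hi), cs.wordProd_reverse ω⟩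

theorem mem_closure_of_isLeftInversion {w t : W} (hw : w ∈ Subgroup.closure (cs.simple '' J))
    (ht : cs.IsLeftInversion w t) : t ∈ Subgroup.closure (cs.simple '' J) := by
  obtain ⟨ω, hω, rfl⟩ := exists_wordProd_eq_of_mem_closure hw
  obtain ⟨k, -, heq⟩ := exists_mul_wordProd_eq_eraseIdx (mem_leftInvSeq_of_isLeftInversion ht)
  rw [← Subgroup.mul_mem_cancel_right _ hw, heq]
  exact wordProd_mem_closure fun i hi => hω i (List.mem_of_mem_eraseIdx hi)

end Parabolic

section ReflectionFactorization

variable {B W : Type*} [Group W] {M : CoxeterMatrix B} {cs : CoxeterSystem M W} {w : W}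

theorem HurwitzEquiv.mem_red_isReflection {l l' : List W} (h : HurwitzEquiv l l')
    (hl : l ∈ Red {t | cs.IsReflection t} w) : l' ∈ Red {t | cs.IsReflection t} w :=
  h.mem_red (fun t _ u => cs.isReflection_conj_iff t u) hl

theorem isLeftInversion_iff_length_prod_tail_lt {t : W} {l : List W}
    (hl : t :: l ∈ Red {t | cs.IsReflection t} w) :
    cs.IsLeftInversion w t ↔ cs.length l.prod < cs.length w := by
  have ht : cs.IsReflection t := hl.1 t List.mem_cons_self
  have htail : t * w = l.prod := by
    rw [← hl.2.1, List.prod_cons, ← mul_assoc, ht.mul_self, one_mul]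
  rw [CoxeterSystem.IsLeftInversion, and_iff_right ht, htail]

theorem exists_hurwitzEquiv_length_prod_tail_lt {t t' : W} {l : List W}
    (hl : t :: t' :: l ∈ Red {t | cs.IsReflection t} w)
    (hup : cs.length w < cs.length (t' :: l).prod)
    (hdown : cs.IsLeftInversion (t' :: l).prod t') :
    ∃ u l', HurwitzEquiv (t :: t' :: l) (u :: l') ∧
      cs.length l'.prod < cs.length (t' :: l).prod := by
  have ht : cs.IsReflection t := hl.1 t List.mem_cons_self
  have hinv : cs.IsLeftInversion (t' :: l).prod t := by
    refine ⟨ht, ?_⟩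
    rwa [← List.prod_cons, hl.2.1]
  have hne : t ≠ t' := by
    rintro rfl
    exact mul_ne_one_of_cons_cons_mem_red hl ht.mul_self
  have hcancel : t' * (t' :: l).prod = l.prod := by
    rw [List.prod_cons, ← mul_assoc, hdown.1.mul_self, one_mul]
  rcases length_mul_mul_lt_or_of_isLeftInversion hinv hdown hne with hlt | hlt
  · refine ⟨_, _, .braid t t' l, ?_⟩
    rwa [mul_assoc, hcancel] at hlt
  · refine ⟨_, _, .braid_inv t t' l, ?_⟩
    rw [List.prod_cons, hdown.1.inv, mul_assoc (t' * t)]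
    rwa [List.prod_cons (a := t')] at hlt ⊢

theorem exists_hurwitzEquiv_cons_isLeftInversion {l : List W}
    (hl : l ∈ Red {t | cs.IsReflection t} w) (hne : l ≠ []) :
    ∃ t l', HurwitzEquiv l (t :: l') ∧ cs.IsLeftInversion w t := by
  induction hn : l.length using Nat.strong_induction_on generalizing l w with
  | _ n ih =>
  obtain ⟨t₀, l₀, rfl⟩ := List.exists_cons_of_ne_nil hne
  obtain ⟨⟨t, l₁⟩, (hequiv : HurwitzEquiv _ (t :: l₁)), hmin⟩ := exists_minimalFor_of_wellFoundedLT
    (fun p : W × List W => HurwitzEquiv (t₀ :: l₀) (p.1 :: p.2)) (fun p => cs.length p.2.prod)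
    ⟨(t₀, l₀), .refl _⟩
  have hred := hequiv.mem_red_isReflection hl
  refine ⟨t, l₁, hequiv, (isLeftInversion_iff_length_prod_tail_lt hred).2 ?_⟩
  by_contra hnlt
  have hup : cs.length w < cs.length l₁.prod := by
    have hlen := (hred.1 t List.mem_cons_self : cs.IsReflection t).length_mul_right_ne l₁.prod
    rw [← List.prod_cons, hred.2.1] at hlen
    omega
  have hne₁ : l₁ ≠ [] := by
    rintro rfl
    simp at hup
  have hlt : l₁.length < n := by rw [← hn, hequiv.length_eq]; exact lt_add_one _
  obtain ⟨t', l₂, htail, hdown⟩ := ih _ hlt (tail_mem_red hred) hne₁ rfl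
  have hequiv' := hequiv.trans (htail.cons t)
  rw [htail.prod_eq] at hup hdown
  obtain ⟨u, l₃, hmove, hlower⟩ :=
    exists_hurwitzEquiv_length_prod_tail_lt (hequiv'.mem_red_isReflection hl) hup hdown
  rw [← htail.prod_eq] at hlower
  exact hlower.not_ge (hmin (j := (u, l₃)) (hequiv'.trans hmove) hlower.le)

theorem mem_closure_of_mem_red {J : Set B} {l : List W}
    (hw : w ∈ Subgroup.closure (cs.simple '' J)) (hl : l ∈ Red {t | cs.IsReflection t} w) :
    ∀ t ∈ l, t ∈ Subgroup.closure (cs.simple '' J) := by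
  induction hn : l.length generalizing l w with
  | zero => simp [List.eq_nil_of_length_eq_zero hn]
  | succ n ih =>
    obtain ⟨t, l', hequiv, hinv⟩ :=
      exists_hurwitzEquiv_cons_isLeftInversion hl (List.ne_nil_of_length_eq_add_one hn)
    have hred := hequiv.mem_red_isReflection hl
    have ht := mem_closure_of_isLeftInversion hw hinv
    have hprod' : l'.prod ∈ Subgroup.closure (cs.simple '' J) := by
      rwa [← Subgroup.mul_mem_cancel_left _ ht, ← List.prod_cons, hred.2.1]
    have hmem := ih hprod' (tail_mem_red hred) (by simpa [hequiv.length_eq] using hn)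
    exact (hequiv.forall_mem_subgroup_iff _).2 (List.forall_mem_cons.2 ⟨ht, hmem⟩)

theorem red_eq_red_of_mem_parabolic_general {J : Set B}
    (hw : w ∈ Subgroup.closure (cs.simple '' J)) :
    Red {t | cs.IsReflection t} w =
      Red (Subgroup.closure (cs.simple '' J) ∩ {t | cs.IsReflection t}) w :=
  red_eq_red_inter fun _ hl => mem_closure_of_mem_red hw hl

end ReflectionFactorization

/-- Let `(W,T)` be a dual Coxeter system of finite rank `m`
(witnessed by a Coxeter system `cs` indexed by `Fin m` whose set of reflections is `T`)
and let `W' = ⟨s₁, …, sₙ⟩` (`n ≤ m`) be a parabolic subgroup of `W`, with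
`T' = W' ∩ T` the set of reflections lying in `W'`.  Then for every `w ∈ W'` one has
`Red_T(w) = Red_{T'}(w)`: every minimal-length factorization of `w` into reflections of
`W` uses only reflections belonging to `W'`. -/
theorem red_eq_red_of_mem_parabolic
    {W : Type*} [Group W] (T : Set W) (m n : ℕ) (hmn : n ≤ m)
    (M : CoxeterMatrix (Fin m)) (cs : CoxeterSystem M W)
    (hT : {t | cs.IsReflection t} = T)
    (W' : Subgroup W)
    (hW' : W' = Subgroup.closure (Set.range fun i : Fin n => cs.simple (Fin.castLE hmn i)))
    (T' : Set W) (hT' : T' = ↑W' ∩ T)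
    (w : W) (hw : w ∈ W') :
    Red T w = Red T' w := by
  subst hT hT' hW'
  have hsimple : (Set.range fun i : Fin n => cs.simple (Fin.castLE hmn i)) =
      cs.simple '' Set.range (Fin.castLE hmn) := Set.range_comp cs.simple (Fin.castLE hmn)
  rw [hsimple] at hw ⊢
  exact red_eq_red_of_mem_parabolic_general hw
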